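/- Let κ > 0, let q be a real-valued Schwartz function on ℝ, and set G_κ(x,y) = e^{−κ|x−y|}/(2κ). Then for every integer ℓ ≥ 2: ∫_{ℝ^ℓ} [ ∏_{i=1}^{ℓ-1} G_κ(x_i,x_{i+1}) q(x_{i+1}) ] G_κ(x_ℓ,x₁) (−q'''(x₁)) dx₁⋯dx_ℓ = ∫_{ℝ^{ℓ-1}} [ ∏_{i=1}^{ℓ-2} G_κ(x_i,x_{i+1}) q(x_{i+1}) ] G_κ(x_{ℓ-1},x₁) · 6 q(x₁) q'(x₁) dx₁⋯dx_{ℓ-1}. In particular, for ℓ = 2 the right-hand side is ∫_ℝ G_κ(x,x) · 6 q(x) q'(x) dx, which equals 0. -/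

import Mathlib

open MeasureTheory Complex Real

/-- The kernel of the free resolvent `(-∂ₓ² + κ²)⁻¹` on `L²(ℝ)`. -/
noncomputable def Gker (κ x y : ℝ) : ℝ := Real.exp (-κ * |x - y|) / (2 * κ)

open Filter Topology

/-- The sign function, real valued. -/
noncomputable def sg (x : ℝ) : ℝ := if 0 < x then 1 else if x < 0 then -1 else 0

lemma sg_pos {x : ℝ} (h : 0 < x) : sg x = 1 := by simp [sg, h]
lemma sg_neg {x : ℝ} (h : x < 0) : sg x = -1 := by simp [sg, h, h.le]
lemma sg_zero : sg 0 = 0 := by simp [sg]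
lemma sg_symm (x : ℝ) : sg (-x) = - sg x := by
  rcases lt_trichotomy x 0 with h | h | h
  · rw [sg_neg h, sg_pos (by linarith)]; norm_num
  · simp [h, sg_zero]
  · rw [sg_pos h, sg_neg (by linarith)]
lemma sg_swap (x y : ℝ) : sg (x - y) = - sg (y - x) := by rw [← sg_symm]; congr 1; ring
lemma measurable_sg : Measurable sg := by
  unfold sg
  exact Measurable.ite measurableSet_Ioi measurable_const
    (Measurable.ite measurableSet_Iio measurable_const measurable_const)
lemma abs_sg_le (x : ℝ) : |sg x| ≤ 1 := by
  rcases lt_trichotomy x 0 with h | h | h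
  · rw [sg_neg h]; norm_num
  · simp [h, sg_zero]
  · rw [sg_pos h]; norm_num

lemma Gker_cont (κ : ℝ) : Continuous (fun p : ℝ × ℝ => Gker κ p.1 p.2) := by
  unfold Gker; fun_prop
lemma Gker_symm (κ x y : ℝ) : Gker κ x y = Gker κ y x := by
  unfold Gker; rw [abs_sub_comm]
lemma Gker_nonneg {κ : ℝ} (hκ : 0 < κ) (x y : ℝ) : 0 ≤ Gker κ x y := by
  unfold Gker; positivity
lemma Gker_le {κ : ℝ} (hκ : 0 < κ) (x y : ℝ) : Gker κ x y ≤ 1 / (2 * κ) := by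
  unfold Gker
  gcongr
  rw [Real.exp_le_one_iff]
  have := mul_nonneg hκ.le (abs_nonneg (x - y))
  linarith
lemma Gker_abs {κ : ℝ} (hκ : 0 < κ) (x y : ℝ) : |Gker κ x y| ≤ 1 / (2 * κ) := by
  rw [abs_of_nonneg (Gker_nonneg hκ x y)]; exact Gker_le hκ x y
lemma Gker_self (κ x : ℝ) : Gker κ x x = 1 / (2 * κ) := by simp [Gker]

lemma Gker_deriv {κ x z : ℝ} (h : x ≠ z) :
    HasDerivAt (fun x => Gker κ x z) (κ * sg (z - x) * Gker κ x z) x := by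
  rcases lt_or_gt_of_ne h with h | h
  · have e : (fun x => Real.exp (-κ * (z - x)) / (2 * κ)) =ᶠ[𝓝 x] fun x => Gker κ x z := by
      filter_upwards [Iio_mem_nhds h] with t ht
      simp only [Gker]; rw [abs_of_neg (sub_neg.2 ht)]; congr 3; ring
    refine HasDerivAt.congr_of_eventuallyEq ?_ e.symm
    rw [← e.eq_of_nhds, sg_pos (by linarith)]
    have := ((((hasDerivAt_id x).const_sub z).const_mul (-κ)).exp).div_const (2 * κ)
    refine this.congr_deriv ?_
    simp; ring
  · have e : (fun x => Real.exp (-κ * (x - z)) / (2 * κ)) =ᶠ[𝓝 x] fun x => Gker κ x z := by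
      filter_upwards [Ioi_mem_nhds h] with t ht
      simp only [Gker]; rw [abs_of_pos (sub_pos.2 ht)]
    refine HasDerivAt.congr_of_eventuallyEq ?_ e.symm
    rw [← e.eq_of_nhds, sg_neg (by linarith)]
    have := ((((hasDerivAt_id x).sub_const z).const_mul (-κ)).exp).div_const (2 * κ)
    refine this.congr_deriv ?_
    simp; ring

/-- Fundamental theorem of calculus on the line with a countable exceptional set. -/
lemma ftc_line {F F' : ℝ → ℝ} {s : Set ℝ} (hs : s.Countable) (hc : Continuous F)
    (hd : ∀ x, x ∉ s → HasDerivAt F (F' x) x) (hi : Integrable F') {a b : ℝ}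
    (ha : Tendsto F atBot (𝓝 a)) (hb : Tendsto F atTop (𝓝 b)) : ∫ x, F' x = b - a := by
  have h1 := intervalIntegral_tendsto_integral hi tendsto_neg_atTop_atBot
    (tendsto_id : Tendsto (id : ℝ → ℝ) atTop atTop)
  have h2 : ∀ t : ℝ, ∫ x in (-t)..(id t), F' x = F t - F (-t) := fun t =>
    integral_eq_of_hasDerivAt_off_countable F F' hs hc.continuousOn
      (fun x hx => hd x hx.2) hi.intervalIntegrable
  simp_rw [h2] at h1
  exact tendsto_nhds_unique h1 (hb.sub (ha.comp tendsto_neg_atTop_atBot))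

lemma ftc_sg {F F' : ℝ → ℝ} {s : Set ℝ} (hs : s.Countable) (hc : Continuous F)
    (hd : ∀ x, x ∉ s → HasDerivAt F (F' x) x) (hi : Integrable F')
    (ha : Tendsto F atBot (𝓝 0)) (hb : Tendsto F atTop (𝓝 0)) (z : ℝ) :
    ∫ x, sg (z - x) * F' x = 2 * F z := by
  have hc' : Continuous (fun x => if x ≤ z then F x - F z else F z - F x) :=
    Continuous.if_le (by fun_prop) (by fun_prop) continuous_id continuous_const
      (by intro x hx; have hx' : x = z := hx; simp [hx'])
  have h := ftc_line (F := fun x => if x ≤ z then F x - F z else F z - F x)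
    (F' := fun x => sg (z - x) * F' x) (s := s ∪ {z}) (a := 0 - F z) (b := F z - 0)
    (hs.union (Set.countable_singleton z)) hc' ?_ ?_ ?_ ?_
  · rw [h]; ring
  · intro x hx
    simp only [Set.mem_union, Set.mem_singleton_iff, not_or] at hx
    have hx1 := hd x hx.1
    rcases lt_or_gt_of_ne hx.2 with h | h
    · rw [sg_pos (by linarith), one_mul]
      refine (hx1.sub_const (F z)).congr_of_eventuallyEq ?_
      filter_upwards [Iio_mem_nhds h] with t ht
      exact if_pos (le_of_lt ht)
    · rw [sg_neg (by linarith), neg_one_mul]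
      refine (hx1.const_sub (F z)).congr_of_eventuallyEq ?_
      filter_upwards [Ioi_mem_nhds h] with t ht
      exact if_neg (not_le.2 ht)
  · refine hi.bdd_mul (c := 1) ?_ ?_
    · exact (measurable_sg.comp (by fun_prop)).aestronglyMeasurable
    · exact ae_of_all _ fun x => abs_sg_le _
  · refine (ha.sub_const (F z)).congr' ?_
    filter_upwards [eventually_le_atBot z] with t ht
    exact (if_pos ht).symm
  · refine (hb.const_sub (F z)).congr' ?_
    filter_upwards [eventually_gt_atTop z] with t ht
    exact (if_neg (not_le.2 ht)).symm

/-- Derivative of a Schwartz function as a Schwartz function. -/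
noncomputable def sd (f : SchwartzMap ℝ ℝ) : SchwartzMap ℝ ℝ := SchwartzMap.derivCLM ℝ ℝ f

lemma sd_apply (f : SchwartzMap ℝ ℝ) (x : ℝ) : sd f x = deriv f x := rfl
lemma sd_hasDerivAt (f : SchwartzMap ℝ ℝ) (x : ℝ) : HasDerivAt f (sd f x) x := f.hasDerivAt x

lemma sch_bdd (f : SchwartzMap ℝ ℝ) : ∃ c, ∀ x, |f x| ≤ c :=
  ⟨‖f.toBoundedContinuousFunction‖, fun x => f.toBoundedContinuousFunction.norm_coe_le_norm x⟩
lemma sch_atTop (f : SchwartzMap ℝ ℝ) : Tendsto f atTop (𝓝 0) :=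
  (SchwartzMap.tendsto_cocompact f).mono_left atTop_le_cocompact
lemma sch_atBot (f : SchwartzMap ℝ ℝ) : Tendsto f atBot (𝓝 0) :=
  (SchwartzMap.tendsto_cocompact f).mono_left atBot_le_cocompact

/-- The product of two kernels. -/
noncomputable def GG (κ z w x : ℝ) : ℝ := Gker κ x z * Gker κ x w

lemma GG_cont (κ z w : ℝ) : Continuous (GG κ z w) := by
  unfold GG Gker; fun_prop

lemma GG_abs {κ : ℝ} (hκ : 0 < κ) (z w x : ℝ) : |GG κ z w x| ≤ 1 / (2 * κ) * (1 / (2 * κ)) := by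
  unfold GG; rw [abs_mul]
  exact mul_le_mul (Gker_abs hκ _ _) (Gker_abs hκ _ _) (abs_nonneg _) (by positivity)

lemma GG_deriv {κ z w x : ℝ} (hz : x ≠ z) (hw : x ≠ w) :
    HasDerivAt (GG κ z w) (κ * (sg (z - x) + sg (w - x)) * GG κ z w x) x := by
  have := (Gker_deriv (κ := κ) hz).mul (Gker_deriv (κ := κ) hw)
  refine this.congr_deriv ?_
  unfold GG; ring

/-- bounded measurable times Schwartz is integrable -/
lemma int_bdd (f : SchwartzMap ℝ ℝ) {b : ℝ → ℝ} (hb : Measurable b) {c : ℝ}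
    (hc : ∀ x, |b x| ≤ c) : Integrable (fun x => f x * b x) :=
  f.integrable.mul_bdd (c := c) hb.aestronglyMeasurable (ae_of_all _ hc)

lemma int_GG {κ : ℝ} (hκ : 0 < κ) (f : SchwartzMap ℝ ℝ) (z w : ℝ) {b : ℝ → ℝ}
    (hb : Measurable b) {c : ℝ} (hc : ∀ x, |b x| ≤ c) :
    Integrable (fun x => f x * b x * GG κ z w x) :=
  (int_bdd f hb hc).mul_bdd (c := 1 / (2 * κ) * (1 / (2 * κ)))
    (GG_cont κ z w).aestronglyMeasurable (ae_of_all _ (GG_abs hκ z w))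

lemma meas_sg (z : ℝ) : Measurable (fun x => sg (z - x)) := measurable_sg.comp (by fun_prop)

lemma abs_sg_add (a b : ℝ) : |sg a + sg b| ≤ 2 :=
  (abs_add_le _ _).trans (by linarith [abs_sg_le a, abs_sg_le b])
lemma abs_sg_mul (a b : ℝ) : |sg a * sg b| ≤ 1 := by
  rw [abs_mul]; exact mul_le_one₀ (abs_sg_le a) (abs_nonneg _) (abs_sg_le b)

/-- data of the function f * GG needed in both integrations by parts -/
lemma fGG_data {κ : ℝ} (hκ : 0 < κ) (f : SchwartzMap ℝ ℝ) (z w : ℝ) :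
    Continuous (fun x => f x * GG κ z w x) ∧
    (∀ x, x ∉ ({z, w} : Set ℝ) → HasDerivAt (fun x => f x * GG κ z w x)
      (sd f x * 1 * GG κ z w x + κ * (f x * (sg (z - x) + sg (w - x)) * GG κ z w x)) x) ∧
    Integrable (fun x => sd f x * 1 * GG κ z w x +
      κ * (f x * (sg (z - x) + sg (w - x)) * GG κ z w x)) ∧
    Tendsto (fun x => f x * GG κ z w x) atBot (𝓝 0) ∧
    Tendsto (fun x => f x * GG κ z w x) atTop (𝓝 0) := by
  refine ⟨f.continuous.mul (GG_cont κ z w), ?_, ?_, ?_, ?_⟩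
  · intro x hx
    simp only [Set.mem_insert_iff, Set.mem_singleton_iff, not_or] at hx
    refine ((sd_hasDerivAt f x).mul (GG_deriv (κ := κ) hx.1 hx.2)).congr_deriv ?_
    ring
  · refine (int_GG hκ _ z w measurable_const (c := 1) (by simp)).add
      ((int_GG hκ f z w ((meas_sg z).add (meas_sg w)) (c := 2) ?_).const_mul κ)
    exact fun x => abs_sg_add _ _
  · exact (sch_atBot f).zero_mul_isBoundedUnder_le
      (isBoundedUnder_of ⟨1 / (2 * κ) * (1 / (2 * κ)), GG_abs hκ z w⟩)
  · exact (sch_atTop f).zero_mul_isBoundedUnder_le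
      (isBoundedUnder_of ⟨1 / (2 * κ) * (1 / (2 * κ)), GG_abs hκ z w⟩)

lemma ibp1 {κ : ℝ} (hκ : 0 < κ) (f : SchwartzMap ℝ ℝ) (z w : ℝ) :
    ∫ x, sd f x * 1 * GG κ z w x =
      - κ * ∫ x, f x * (sg (z - x) + sg (w - x)) * GG κ z w x := by
  obtain ⟨h1, h2, h3, h4, h5⟩ := fGG_data hκ f z w
  have := ftc_line (Set.toFinite _).countable h1 h2 h3 h4 h5
  have i1 : Integrable fun x => sd f x * 1 * GG κ z w x :=
    int_GG hκ _ z w measurable_const (c := 1) (by simp)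
  have i2 : Integrable fun x => f x * (sg (z - x) + sg (w - x)) * GG κ z w x :=
    int_GG hκ f z w ((meas_sg z).add (meas_sg w)) (c := 2) fun x => abs_sg_add _ _
  rw [integral_add i1 (i2.const_mul κ), integral_const_mul] at this
  linarith

lemma ae_ne (z : ℝ) : ∀ᵐ x : ℝ, x ≠ z := by
  simp [ae_iff]

lemma sg_sq {x : ℝ} (h : x ≠ 0) : sg x * sg x = 1 := by
  rcases lt_or_gt_of_ne h with h | h
  · rw [sg_neg h]; norm_num
  · rw [sg_pos h]; norm_num

lemma ibp2 {κ : ℝ} (hκ : 0 < κ) (f : SchwartzMap ℝ ℝ) (z w : ℝ) :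
    ∫ x, sd f x * sg (z - x) * GG κ z w x =
      2 * (f z * GG κ z w z) - κ * (∫ x, f x * 1 * GG κ z w x)
       - κ * ∫ x, f x * (sg (z - x) * sg (w - x)) * GG κ z w x := by
  obtain ⟨h1, h2, h3, h4, h5⟩ := fGG_data hκ f z w
  have := ftc_sg (Set.toFinite _).countable h1 h2 h3 h4 h5 z
  rw [← this, ← integral_const_mul, ← integral_const_mul, ← integral_sub, ← integral_sub]
  · refine integral_congr_ae ?_
    filter_upwards [ae_ne z] with x hx
    have := sg_sq (sub_ne_zero.2 hx.symm)
    linear_combination (- κ * f x * GG κ z w x) * this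
  · refine Integrable.sub (h3.bdd_mul (c := 1) (meas_sg z).aestronglyMeasurable
      (ae_of_all _ fun x => abs_sg_le _)) ?_
    exact (int_GG hκ f z w measurable_const (c := 1) (by simp)).const_mul κ
  · exact (int_GG hκ f z w ((meas_sg z).mul (meas_sg w)) (c := 1)
      fun x => abs_sg_mul _ _).const_mul κ
  · exact h3.bdd_mul (c := 1) (meas_sg z).aestronglyMeasurable
      (ae_of_all _ fun x => abs_sg_le _)
  · exact (int_GG hκ f z w measurable_const (c := 1) (by simp)).const_mul κ

lemma GG_swap (κ z w x : ℝ) : GG κ z w x = GG κ w z x := by unfold GG; ring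
lemma GG_left (κ z w : ℝ) : GG κ z w z = Gker κ z w / (2 * κ) := by
  unfold GG; rw [Gker_self]; ring

lemma mid_const {κ : ℝ} {z w x : ℝ} (hz : x ≠ z) (hw : x ≠ w) :
    (1 - sg (z - x) * sg (w - x)) * GG κ z w x =
      Gker κ z w / (2 * κ) * sg (w - z) * (sg (w - x) - sg (z - x)) := by
  unfold GG Gker
  rcases lt_or_gt_of_ne hz with h | h <;> rcases lt_or_gt_of_ne hw with h' | h'
  · rw [sg_pos (sub_pos.2 h), sg_pos (sub_pos.2 h')]; ring
  · rw [sg_pos (sub_pos.2 h), sg_neg (sub_neg.2 h'), sg_neg (by linarith),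
      abs_of_neg (sub_neg.2 h), abs_of_pos (sub_pos.2 h'), abs_of_pos (by linarith : 0 < z - w),
      show -κ * (z - w) = -κ * (-(x - z)) + -κ * (x - w) by ring, Real.exp_add]
    ring
  · rw [sg_neg (sub_neg.2 h), sg_pos (sub_pos.2 h'), sg_pos (by linarith),
      abs_of_pos (sub_pos.2 h), abs_of_neg (sub_neg.2 h'), abs_of_neg (by linarith : z - w < 0),
      show -κ * (-(z - w)) = -κ * (x - z) + -κ * (-(x - w)) by ring, Real.exp_add]
    ring
  · rw [sg_neg (sub_neg.2 h), sg_neg (sub_neg.2 h')]; ring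

lemma ibp3 {κ : ℝ} (hκ : 0 < κ) (f : SchwartzMap ℝ ℝ) (z w : ℝ) :
    ∫ x, sd f x * (sg (z - x) * sg (w - x)) * GG κ z w x =
      (∫ x, sd f x * 1 * GG κ z w x)
        - Gker κ z w / κ * (sg (z - w) * (f z - f w)) := by
  have hS : ∀ y, ∫ x, sg (y - x) * sd f x = 2 * f y := fun y =>
    ftc_sg (Set.countable_empty) f.continuous (fun x _ => sd_hasDerivAt f x) (sd f).integrable
      (sch_atBot f) (sch_atTop f) y
  have hI : ∀ y, Integrable fun x => sg (y - x) * sd f x := fun y =>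
    (sd f).integrable.bdd_mul (c := 1) (meas_sg y).aestronglyMeasurable
      (ae_of_all _ fun x => abs_sg_le _)
  have key : (∫ x, sd f x * 1 * GG κ z w x) -
      ∫ x, sd f x * (sg (z - x) * sg (w - x)) * GG κ z w x =
      Gker κ z w / (2 * κ) * sg (w - z) * (2 * f w - 2 * f z) := by
    rw [← hS, ← hS, ← integral_sub (hI w) (hI z), ← integral_const_mul, ← integral_sub]
    · refine integral_congr_ae ?_
      filter_upwards [ae_ne z, ae_ne w] with x hz hw
      linear_combination sd f x * mid_const (κ := κ) hz hw
    · exact int_GG hκ _ z w measurable_const (c := 1) (by simp)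
    · exact int_GG hκ _ z w ((meas_sg z).mul (meas_sg w)) (c := 1) fun x => abs_sg_mul _ _
  rw [sg_swap w z] at key
  have : Gker κ z w / κ * (sg (z - w) * (f z - f w)) =
    Gker κ z w / (2 * κ) * -sg (z - w) * (2 * f w - 2 * f z) := by field_simp; ring
  rw [this]; linarith

lemma inner_identity {κ : ℝ} (hκ : 0 < κ) (q : SchwartzMap ℝ ℝ) (z w : ℝ) :
    ∫ x, (4 * κ ^ 2 * sd q x - sd (sd (sd q)) x) * GG κ z w x =
      Gker κ z w * (sd q z + sd q w + 2 * κ * (sg (z - w) * (q z - q w))) := by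
  have i1 : ∀ f : SchwartzMap ℝ ℝ, Integrable fun x => f x * 1 * GG κ z w x := fun f =>
    int_GG hκ f z w measurable_const (c := 1) (by simp)
  have e1 : ∫ x, (4 * κ ^ 2 * sd q x - sd (sd (sd q)) x) * GG κ z w x =
      4 * κ ^ 2 * (∫ x, sd q x * 1 * GG κ z w x) - ∫ x, sd (sd (sd q)) x * 1 * GG κ z w x := by
    rw [← integral_const_mul, ← integral_sub ((i1 _).const_mul _) (i1 _)]
    congr 1; ext x; ring
  have e2 := ibp1 hκ (sd (sd q)) z w
  have e3 : ∫ x, sd (sd q) x * (sg (z - x) + sg (w - x)) * GG κ z w x =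
      (∫ x, sd (sd q) x * sg (z - x) * GG κ z w x) +
      ∫ x, sd (sd q) x * sg (w - x) * GG κ w z x := by
    rw [← integral_add]
    · congr 1; ext x; rw [GG_swap κ w z]; ring
    · exact int_GG hκ _ z w (meas_sg z) (c := 1) fun x => abs_sg_le _
    · exact int_GG hκ _ w z (meas_sg w) (c := 1) fun x => abs_sg_le _
  have e4 := ibp2 hκ (sd q) z w
  have e5 := ibp2 hκ (sd q) w z
  have e6 := ibp3 hκ q z w
  simp_rw [mul_comm (sg (w - _)) (sg (z - _)), GG_swap κ w z] at e5
  rw [← GG_swap κ w z w, GG_left, Gker_symm κ w z] at e5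
  rw [GG_left] at e4
  simp_rw [GG_swap κ w z] at e3
  rw [e1, e2, e3, e4, e5, e6]
  field_simp
  ring

/-- The cyclic product of kernels. -/
noncomputable def cyc (κ : ℝ) (n : ℕ) (x : Fin (n + 1) → ℝ) : ℝ :=
  ∏ i : Fin (n + 1), Gker κ (x i) (x (i + 1))

/-- The open chain of kernels. -/
noncomputable def chain (κ : ℝ) (n : ℕ) (x : Fin (n + 1) → ℝ) : ℝ :=
  ∏ i : Fin n, Gker κ (x i.castSucc) (x i.succ)

lemma cyc_eq_chain (κ : ℝ) (n : ℕ) (y : Fin (n + 1) → ℝ) :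
    cyc κ n y = chain κ n y * Gker κ (y 0) (y (Fin.last n)) := by
  unfold cyc chain
  rw [Fin.prod_univ_castSucc, Fin.last_add_one, Gker_symm κ (y 0)]
  congr 1
  refine Finset.prod_congr rfl fun i _ => ?_
  rw [Fin.coeSucc_eq_succ]

lemma cyc_cons (κ : ℝ) (n : ℕ) (a : ℝ) (y : Fin (n + 1) → ℝ) :
    cyc κ (n + 1) (Fin.cons a y) = chain κ n y * GG κ (y 0) (y (Fin.last n)) a := by
  unfold GG
  rw [cyc_eq_chain]
  unfold chain
  rw [Fin.prod_univ_succ]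
  have h0 : (Fin.cons a y : Fin (n + 2) → ℝ) (Fin.last (n + 1)) = y (Fin.last n) := by
    rw [← Fin.succ_last, Fin.cons_succ]
  rw [h0]
  simp only [Fin.castSucc_zero, Fin.cons_zero, Fin.cons_succ, ← Fin.succ_castSucc]
  ring

lemma cyc_meas (κ : ℝ) (n : ℕ) : Measurable (cyc κ n) := by
  unfold cyc
  have : Continuous fun x : Fin (n + 1) → ℝ => ∏ i : Fin (n + 1), Gker κ (x i) (x (i + 1)) := by
    unfold Gker; fun_prop
  exact this.measurable

lemma cyc_abs {κ : ℝ} (hκ : 0 < κ) (n : ℕ) (x : Fin (n + 1) → ℝ) :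
    |cyc κ n x| ≤ (1 / (2 * κ)) ^ (n + 1) := by
  unfold cyc
  rw [Finset.abs_prod]
  refine (Finset.prod_le_prod (fun i _ => abs_nonneg _) (fun i _ => Gker_abs hκ _ _)).trans ?_
  simp

lemma int_cyc {κ : ℝ} (hκ : 0 < κ) (n : ℕ) (f : Fin (n + 1) → ℝ → ℝ)
    (hf : ∀ i, Integrable (f i)) {b : (Fin (n + 1) → ℝ) → ℝ} (hb : Measurable b) {c : ℝ}
    (hc : ∀ x, |b x| ≤ c) :
    Integrable (fun x : Fin (n + 1) → ℝ => cyc κ n x * b x * ∏ i, f i (x i)) := by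
  have h1 : Integrable (fun x : Fin (n + 1) → ℝ => ∏ i, f i (x i)) :=
    Integrable.fintype_prod hf
  refine h1.bdd_mul (c := (1 / (2 * κ)) ^ (n + 1) * c)
    ((cyc_meas κ n).mul hb).aestronglyMeasurable (ae_of_all _ fun x => ?_)
  rw [Real.norm_eq_abs, abs_mul]
  exact mul_le_mul (cyc_abs hκ n x) (hc x) (abs_nonneg _) (by positivity)

/-- Fubini separating the variable with index zero. -/
lemma fub_cons (n : ℕ) (H : (Fin (n + 1) → ℝ) → ℝ) (hH : Integrable H) :
    ∫ x, H x = ∫ y : Fin n → ℝ, ∫ a : ℝ, H (Fin.cons a y) := by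
  have mp := (volume_preserving_piFinSuccAbove (fun _ : Fin (n + 1) => ℝ) 0).symm
  rw [← mp.integral_comp' H]
  have hi := (mp.integrable_comp_emb (MeasurableEquiv.measurableEmbedding _)).2 hH
  have := integral_prod_symm _ hi
  refine Eq.trans this ?_
  congr 1; ext y; congr 1; ext a
  simp [MeasurableEquiv.piFinSuccAbove, Fin.insertNthEquiv, Fin.insertNth_zero']

lemma fub {κ : ℝ} (hκ : 0 < κ) (n : ℕ) (q : SchwartzMap ℝ ℝ) {h : ℝ → ℝ} (hh : Integrable h)
    {b : ℝ → ℝ → ℝ → ℝ} (hb : Measurable fun p : ℝ × ℝ × ℝ => b p.1 p.2.1 p.2.2) {c : ℝ}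
    (hc : ∀ x y z, |b x y z| ≤ c) :
    ∫ x : Fin (n + 2) → ℝ, cyc κ (n + 1) x * b (x 0) (x 1) (x (Fin.last (n + 1))) *
      ∏ i, (if i = 0 then h (x i) else q (x i)) =
    ∫ y : Fin (n + 1) → ℝ, (chain κ n y * ∏ i, q (y i)) *
      ∫ a, h a * b a (y 0) (y (Fin.last n)) * GG κ (y 0) (y (Fin.last n)) a := by
  rw [fub_cons]
  · congr 1; ext y
    rw [← integral_const_mul]
    congr 1; ext a
    rw [cyc_cons, Fin.prod_univ_succ, ← Fin.succ_last, ← Fin.succ_zero_eq_one]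
    simp only [Fin.cons_zero, Fin.cons_succ, Fin.succ_ne_zero, if_true, if_false]
    ring
  · have := int_cyc hκ (n + 1) (fun i => if i = 0 then h else q)
      (fun i => by by_cases hi : i = 0 <;> simp [hi, hh, q.integrable])
      (b := fun x => b (x 0) (x 1) (x (Fin.last (n + 1))))
      (hb.comp (by fun_prop : Measurable fun x : Fin (n + 2) → ℝ =>
        (x 0, x 1, x (Fin.last (n + 1))))) (c := c) (fun x => hc _ _ _)
    refine this.congr (ae_of_all _ fun x => ?_)
    simp only
    congr 1
    refine Finset.prod_congr rfl fun i _ => ?_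
    by_cases hi : i = 0 <;> simp [hi]

/-- the full cyclic density -/
noncomputable def Pi' (κ : ℝ) (q : SchwartzMap ℝ ℝ) (n : ℕ) (x : Fin (n + 1) → ℝ) : ℝ :=
  cyc κ n x * ∏ i, q (x i)

lemma shift (κ : ℝ) (q : SchwartzMap ℝ ℝ) (n : ℕ) (F : ℝ → ℝ → ℝ) :
    ∫ x, Pi' κ q n x * F (x (Fin.last n)) (x 0) = ∫ x, Pi' κ q n x * F (x 0) (x 1) := by
  have mp := volume_measurePreserving_piCongrLeft (fun _ : Fin (n + 1) => ℝ)
    (Equiv.addRight (-1 : Fin (n + 1)))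
  rw [← mp.integral_comp' ]
  have e : ∀ (x : Fin (n + 1) → ℝ) i, MeasurableEquiv.piCongrLeft (fun _ : Fin (n + 1) => ℝ)
    (Equiv.addRight (-1 : Fin (n + 1))) x i = x (i + 1) := by
    intro x i
    have := MeasurableEquiv.piCongrLeft_apply_apply (β := fun _ : Fin (n + 1) => ℝ)
      (Equiv.addRight (-1 : Fin (n + 1))) x (i + 1)
    simpa using this
  congr 1; ext x
  simp only [Pi', cyc, e]
  rw [Fin.last_add_one, zero_add]
  congr 2
  · exact Fintype.prod_equiv (Equiv.addRight (1 : Fin (n + 1))) _ _ (fun i => rfl)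
  · exact Fintype.prod_equiv (Equiv.addRight (1 : Fin (n + 1))) _ _ (fun i => rfl)

lemma int_Pi {κ : ℝ} (hκ : 0 < κ) (q : SchwartzMap ℝ ℝ) (n : ℕ) {b : (Fin (n + 1) → ℝ) → ℝ}
    (hb : Measurable b) {c : ℝ} (hc : ∀ x, |b x| ≤ c) :
    Integrable fun x => Pi' κ q n x * b x := by
  refine (int_cyc hκ n (fun _ => q) (fun _ => q.integrable) hb hc).congr
    (ae_of_all _ fun x => ?_)
  simp only [Pi']; ring

/-- Integration by parts in the variable with index zero. -/
lemma ibp_cyc {κ : ℝ} (hκ : 0 < κ) (n : ℕ) (q f : SchwartzMap ℝ ℝ) :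
    ∫ x : Fin (n + 2) → ℝ, cyc κ (n + 1) x *
      ∏ i, (if i = 0 then sd f (x i) else q (x i)) =
    - κ * ∫ x : Fin (n + 2) → ℝ, cyc κ (n + 1) x *
      (sg (x 1 - x 0) + sg (x (Fin.last (n + 1)) - x 0)) *
      ∏ i, (if i = 0 then f (x i) else q (x i)) := by
  have h1 := fub hκ n q (sd f).integrable (b := fun _ _ _ => 1) measurable_const (c := 1)
    (by simp)
  have h2 := fub hκ n q f.integrable (b := fun x y z => sg (y - x) + sg (z - x))
    ((measurable_sg.comp (by fun_prop)).add (measurable_sg.comp (by fun_prop))) (c := 2)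
    (fun x y z => abs_sg_add _ _)
  simp only [mul_one] at h1
  rw [h1, h2, ← integral_const_mul]
  congr 1; ext y
  have := ibp1 hκ f (y 0) (y (Fin.last n))
  simp only [mul_one] at this
  rw [this]; ring

lemma prod_ite_zero (n : ℕ) (u v : ℝ → ℝ) (x : Fin (n + 1) → ℝ) (w : ℝ → ℝ)
    (h : ∀ t, u t = w t * v t) :
    ∏ i, (if i = 0 then u (x i) else v (x i)) = (∏ i, v (x i)) * w (x 0) := by
  rw [Fin.prod_univ_succ, Fin.prod_univ_succ]
  simp only [if_true, Fin.succ_ne_zero, if_false, h]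
  ring

/-- the square of a Schwartz function -/
noncomputable def ssq (q : SchwartzMap ℝ ℝ) : SchwartzMap ℝ ℝ :=
  SchwartzMap.pairing (ContinuousLinearMap.mul ℝ ℝ) q q

lemma ssq_apply (q : SchwartzMap ℝ ℝ) (x : ℝ) : ssq q x = q x * q x := rfl
lemma sd_ssq (q : SchwartzMap ℝ ℝ) (x : ℝ) : sd (ssq q) x = 2 * sd q x * q x := by
  have h1 := sd_hasDerivAt (ssq q) x
  have h2 : HasDerivAt (ssq q) _ x := (sd_hasDerivAt q x).mul (sd_hasDerivAt q x)
  rw [h1.unique h2]; ring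

lemma last_part (κ : ℝ) (q : SchwartzMap ℝ ℝ) :
    ∫ x : ℝ, Gker κ x x * (6 * q x * deriv (⇑q) x) = 0 := by
  have := ftc_line Set.countable_empty (ssq q).continuous (fun x _ => sd_hasDerivAt (ssq q) x)
    (sd (ssq q)).integrable (sch_atBot _) (sch_atTop _)
  have h2 : ∀ x, Gker κ x x * (6 * q x * deriv (⇑q) x) = (3 / (2 * κ)) * sd (ssq q) x := by
    intro x; rw [sd_ssq, Gker_self, ← sd_apply]; ring
  simp_rw [h2, integral_const_mul, this]; simp

lemma fin_one_integral (H : (Fin 1 → ℝ) → ℝ) : ∫ x, H x = ∫ t : ℝ, H (fun _ => t) := by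
  have mp := (volume_preserving_funUnique (Fin 1) ℝ).symm
  exact (mp.integral_comp (MeasurableEquiv.measurableEmbedding _) H).symm

/-- J identity -/
lemma J_identity {κ : ℝ} (hκ : 0 < κ) (n : ℕ) (q : SchwartzMap ℝ ℝ) :
    2 * ∫ x, Pi' κ q n x * sd q (x 0) =
      - κ * ∫ x, Pi' κ q n x * ((sg (x 1 - x 0) + sg (x (Fin.last n) - x 0)) * q (x 0)) := by
  cases n with
  | zero =>
    rw [fin_one_integral, fin_one_integral]
    simp only [sub_self, sg_zero, add_zero, zero_mul, mul_zero, integral_zero]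
    have := last_part κ q
    rw [mul_eq_zero]; right
    have h2 : ∀ t, Pi' κ q 0 (fun _ => t) * sd q t =
      (1 / 6) * (Gker κ t t * (6 * q t * deriv (⇑q) t)) := by
      intro t; simp [Pi', cyc, sd_apply]; ring
    simp_rw [h2, integral_const_mul, this]; simp
  | succ n =>
    have := ibp_cyc hκ n q (ssq q)
    rw [← integral_const_mul]
    convert this using 1
    · congr 1; ext x
      rw [prod_ite_zero (n + 1) (sd (ssq q)) q x (fun t => 2 * sd q t) (fun t => sd_ssq q t), Pi']
      ring
    · congr 2; ext x
      rw [prod_ite_zero (n + 1) (ssq q) q x q (fun t => ssq_apply q t), Pi']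
      ring

lemma Z_zero {κ : ℝ} (hκ : 0 < κ) (n : ℕ) (q : SchwartzMap ℝ ℝ) :
    ∫ x : Fin (n + 2) → ℝ, cyc κ (n + 1) x *
      ∏ i, (if i = 0 then sd q (x i) else q (x i)) = 0 := by
  rw [ibp_cyc hκ n q q]
  have h1 := shift κ q (n + 1) (fun a b => sg (b - a))
  have m1 : Measurable fun x : Fin (n + 2) → ℝ => sg (x 1 - x 0) :=
    measurable_sg.comp (by fun_prop)
  have m2 : Measurable fun x : Fin (n + 2) → ℝ => sg (x (Fin.last (n + 1)) - x 0) :=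
    measurable_sg.comp (by fun_prop)
  have h2 : ∫ x : Fin (n + 2) → ℝ, cyc κ (n + 1) x *
      (sg (x 1 - x 0) + sg (x (Fin.last (n + 1)) - x 0)) *
      ∏ i, (if i = 0 then q (x i) else q (x i)) =
      (∫ x, Pi' κ q (n + 1) x * sg (x 1 - x 0)) +
      ∫ x, Pi' κ q (n + 1) x * sg (x (Fin.last (n + 1)) - x 0) := by
    rw [← integral_add (int_Pi hκ q _ m1 (c := 1) fun x => abs_sg_le _)
      (int_Pi hκ q _ m2 (c := 1) fun x => abs_sg_le _)]
    congr 1; ext x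
    simp only [ite_self, Pi']; ring
  have h3 : ∫ x, Pi' κ q (n + 1) x * sg (x (Fin.last (n + 1)) - x 0) =
      - ∫ x, Pi' κ q (n + 1) x * sg (x 0 - x (Fin.last (n + 1))) := by
    rw [← integral_neg]; congr 1; ext x
    rw [sg_swap]; ring
  rw [h2, h3, h1]; ring

lemma main_identity {κ : ℝ} (hκ : 0 < κ) (n : ℕ) (q : SchwartzMap ℝ ℝ) :
    ∫ x : Fin (n + 2) → ℝ, cyc κ (n + 1) x *
      ∏ i, (if i = 0 then - sd (sd (sd q)) (x i) else q (x i)) =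
    6 * ∫ x, Pi' κ q n x * sd q (x 0) := by
  have hh : Integrable (fun x => 4 * κ ^ 2 * sd q x - sd (sd (sd q)) x) :=
    ((sd q).integrable.const_mul _).sub (sd (sd (sd q))).integrable
  have h1 := fub hκ n q hh (b := fun _ _ _ => 1) measurable_const (c := 1) (by simp)
  simp only [mul_one] at h1
  simp_rw [inner_identity hκ q] at h1
  obtain ⟨c1, hc1⟩ := sch_bdd q
  obtain ⟨c2, hc2⟩ := sch_bdd (sd q)
  -- left side
  have ii : ∀ f : SchwartzMap ℝ ℝ, Integrable fun x : Fin (n + 2) → ℝ => cyc κ (n + 1) x *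
      ∏ i, (if i = 0 then f (x i) else q (x i)) := by
    intro f
    have := int_cyc hκ (n + 1) (fun i => if i = 0 then f else q)
      (fun i => by by_cases hi : i = 0 <;> simp [hi, f.integrable, q.integrable])
      (b := fun _ => 1) measurable_const (c := 1) (by simp)
    refine this.congr (ae_of_all _ fun x => ?_)
    simp only [mul_one]
    congr 1
    refine Finset.prod_congr rfl fun i _ => ?_
    by_cases hi : i = 0 <;> simp [hi]
  have hL : ∫ x : Fin (n + 2) → ℝ, cyc κ (n + 1) x *
      ∏ i, (if i = 0 then 4 * κ ^ 2 * sd q (x i) - sd (sd (sd q)) (x i) else q (x i)) =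
      ∫ x : Fin (n + 2) → ℝ, cyc κ (n + 1) x *
      ∏ i, (if i = 0 then - sd (sd (sd q)) (x i) else q (x i)) := by
    have e1 : ∀ x : Fin (n + 2) → ℝ, cyc κ (n + 1) x *
      ∏ i, (if i = 0 then 4 * κ ^ 2 * sd q (x i) - sd (sd (sd q)) (x i) else q (x i)) =
      4 * κ ^ 2 * (cyc κ (n + 1) x * ∏ i, (if i = 0 then sd q (x i) else q (x i))) +
      (cyc κ (n + 1) x * ∏ i, (if i = 0 then (- sd (sd (sd q))) (x i) else q (x i))) := by
      intro x
      rw [Fin.prod_univ_succ (n := n + 1), Fin.prod_univ_succ (n := n + 1),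
        Fin.prod_univ_succ (n := n + 1)]
      simp only [if_true, Fin.succ_ne_zero, if_false, neg_apply]
      ring
    simp_rw [e1]
    rw [integral_add ((ii _).const_mul _) (ii _), integral_const_mul, Z_zero hκ, mul_zero,
      zero_add]
    rfl
  rw [← hL, h1]
  -- right side
  have m1 : Measurable fun x : Fin (n + 1) → ℝ => sg (x 1 - x 0) * q (x 0) :=
    (measurable_sg.comp (by fun_prop)).mul (q.continuous.measurable.comp (by fun_prop))
  have m2 : Measurable fun x : Fin (n + 1) → ℝ => sg (x (Fin.last n) - x 0) * q (x 0) :=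
    (measurable_sg.comp (by fun_prop)).mul (q.continuous.measurable.comp (by fun_prop))
  have m3 : Measurable fun x : Fin (n + 1) → ℝ => sg (x 0 - x (Fin.last n)) * q (x (Fin.last n)) :=
    (measurable_sg.comp (by fun_prop)).mul (q.continuous.measurable.comp (by fun_prop))
  have bd : ∀ a t, |sg a * q t| ≤ 1 * c1 := fun a t => by
    rw [abs_mul]; exact mul_le_mul (abs_sg_le _) (hc1 _) (abs_nonneg _) zero_le_one
  have i1 := int_Pi hκ q n m1 (fun x => bd _ _)
  have i2 := int_Pi hκ q n m2 (fun x => bd _ _)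
  have i3 := int_Pi hκ q n m3 (fun x => bd _ _)
  have i4 := int_Pi hκ q n (b := fun x => sd q (x 0))
    ((sd q).continuous.measurable.comp (by fun_prop)) (fun x => hc2 _)
  have i5 := int_Pi hκ q n (b := fun x => sd q (x (Fin.last n)))
    ((sd q).continuous.measurable.comp (by fun_prop)) (fun x => hc2 _)
  have s1 := shift κ q n (fun a b => sd q a)
  have s2 := shift κ q n (fun a b => sg (b - a) * q a)
  have hJ := J_identity hκ n q
  have hJ2 : ∫ x, Pi' κ q n x * ((sg (x 1 - x 0) + sg (x (Fin.last n) - x 0)) * q (x 0)) =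
      (∫ x, Pi' κ q n x * (sg (x 1 - x 0) * q (x 0))) +
      ∫ x, Pi' κ q n x * (sg (x (Fin.last n) - x 0) * q (x 0)) := by
    rw [← integral_add i1 i2]; congr 1; ext x; ring
  have hR : ∀ y : Fin (n + 1) → ℝ, (chain κ n y * ∏ i, q (y i)) *
      (Gker κ (y 0) (y (Fin.last n)) * (sd q (y 0) + sd q (y (Fin.last n)) +
        2 * κ * (sg (y 0 - y (Fin.last n)) * (q (y 0) - q (y (Fin.last n)))))) =
      (Pi' κ q n y * sd q (y 0) + Pi' κ q n y * sd q (y (Fin.last n))) +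
      (-(2 * κ)) * (Pi' κ q n y * (sg (y (Fin.last n) - y 0) * q (y 0)) +
        Pi' κ q n y * (sg (y 0 - y (Fin.last n)) * q (y (Fin.last n)))) := by
    intro y
    rw [sg_swap (y (Fin.last n)) (y 0), Pi', cyc_eq_chain]; ring
  simp_rw [hR]
  have i45 : Integrable fun y => Pi' κ q n y * sd q (y 0) +
      Pi' κ q n y * sd q (y (Fin.last n)) := i4.add i5
  have i23 : Integrable fun y => Pi' κ q n y * (sg (y (Fin.last n) - y 0) * q (y 0)) +
      Pi' κ q n y * (sg (y 0 - y (Fin.last n)) * q (y (Fin.last n))) := i2.add i3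
  rw [integral_add i45 (i23.const_mul _), integral_const_mul,
    integral_add i4 i5, integral_add i2 i3, s1, s2]
  rw [hJ2] at hJ
  linarith

/-- Trace identities expressing conservation of the renormalized perturbation determinant
under the KdV flow: for each `ℓ = m + 2 ≥ 2`,
`tr{(R₀q)^{ℓ-1} R₀ (-q''')} = tr{(R₀q)^{ℓ-2} R₀ (6qq')}`, written out via the cyclic kernel
integrals; and for `ℓ = 2` the right-hand side `∫ G_κ(x,x) 6 q(x) q'(x) dx` vanishes. -/
theorem kdv_trace_identities (κ : ℝ) (hκ : 0 < κ) (q : SchwartzMap ℝ ℝ) :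
    (∀ m : ℕ,
      ∫ x : Fin (m + 2) → ℝ,
        (∏ i : Fin (m + 2), Gker κ (x i) (x (i + 1))) *
          ∏ i : Fin (m + 2),
            (if i = 0 then -(iteratedDeriv 3 (⇑q) (x i)) else q (x i)) =
      ∫ x : Fin (m + 1) → ℝ,
        (∏ i : Fin (m + 1), Gker κ (x i) (x (i + 1))) *
          ∏ i : Fin (m + 1),
            (if i = 0 then 6 * q (x i) * deriv (⇑q) (x i) else q (x i))) ∧
    ∫ x : ℝ, Gker κ x x * (6 * q x * deriv (⇑q) x) = 0 := by
  refine ⟨fun m => ?_, last_part κ q⟩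
  have h3 : ∀ t, iteratedDeriv 3 (⇑q) t = sd (sd (sd q)) t := by
    intro t
    rw [iteratedDeriv_succ, iteratedDeriv_succ, iteratedDeriv_one]
    rfl
  have h := main_identity hκ m q
  simp_rw [h3]
  refine Eq.trans h ?_
  rw [← integral_const_mul]
  congr 1; ext x
  have := prod_ite_zero m (fun t => 6 * q t * deriv (⇑q) t) q x (fun t => 6 * sd q t)
    (fun t => by rw [sd_apply]; ring)
  rw [this, Pi', cyc]
  ring
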